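/- Assume the maximal solution J of the averaged system exists on [0,U) for some U ∈ (0,+∞]. Let R : [0,U) → T¹₁(ℝ^d) and K : [0,U) → ℝ^d be the solutions of dR/dτ = (∂f̄/∂I)(J(τ)) R, R(0) = 1_d, and dK/dτ = (∂f̄/∂I)(J(τ)) K + p̄(J(τ)), K(0) = 0. Assume the solution (I,Θ) of the perturbed system exists for t ∈ [0,U/ε), with the segment [J(εt), I(t)] contained in Λ (i.e. (J(εt), I(t)−J(εt)) ∈ Λ†) for all such t. Define L(t) := (1/ε)[I(t) − J(εt)]. Then for all t ∈ [0,U/ε): L(t) = s(I(t),Θ(t)) − R(εt) s(I₀,θ₀) − K(εt) − ε ( w(I(t),Θ(t)) − (∂f̄/∂I)(J(εt)) v(I(t),Θ(t)) ) + ε² R(εt) ∫₀^t R(εt')^{-1} [ u(I(t'),Θ(t')) − (∂f̄/∂I)(J(εt')) (w+q)(I(t'),Θ(t')) − 𝓜(J(εt')) v(I(t'),Θ(t')) − 𝓖(J(εt'), εL(t')) L(t') + (1/2) 𝓗(J(εt'), εL(t')) L(t') L(t') ] dt'. -/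

import Mathlib

open scoped Real
open MeasureTheory Matrix

universe u

/-- An interval integral depends continuously on a parameter if the integrand is jointly
continuous. -/
theorem continuousOn_intervalIntegral_param {E F : Type*} [NormedAddCommGroup E]
    [LocallyCompactSpace E] [NormedAddCommGroup F] [NormedSpace ℝ F]
    {S : Set E} (hS : IsOpen S) {h : E × ℝ → F} (hh : ContinuousOn h (S ×ˢ Set.univ)) (a b : ℝ) :
    ContinuousOn (fun x => ∫ t in a..b, h (x, t)) S := by
  intro x₀ hx₀
  obtain ⟨k, hk, hkS, hkc⟩ := local_compact_nhds (hS.mem_nhds hx₀)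
  obtain ⟨C, hC⟩ := (hkc.prod (isCompact_uIcc (a := a) (b := b))).exists_bound_of_continuousOn
    (hh.mono (Set.prod_mono hkS (Set.subset_univ _)))
  have hline : ∀ x ∈ S, Continuous fun t => h (x, t) := fun x hx =>
    hh.comp_continuous (by fun_prop) fun t => ⟨hx, Set.mem_univ _⟩
  refine (intervalIntegral.continuousAt_of_dominated_interval (bound := fun _ => C) ?_ ?_ ?_
    ?_).continuousWithinAt
  · filter_upwards [hk] with x hx using (hline x (hkS hx)).aestronglyMeasurable
  · filter_upwards [hk] with x hx
    exact .of_forall fun t ht => hC (x, t) ⟨hx, Set.uIoc_subset_uIcc ht⟩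
  · exact intervalIntegrable_const
  · refine .of_forall fun t _ => ?_
    exact (hh.continuousAt ((hS.prod isOpen_univ).mem_nhds ⟨hx₀, Set.mem_univ t⟩)).comp
      (f := fun x => (x, t)) (by fun_prop)

/-- Differentiation under the interval integral for a jointly `C¹` integrand. -/
theorem hasFDerivAt_intervalIntegral_param {E F : Type*} [NormedAddCommGroup E] [NormedSpace ℝ E]
    [LocallyCompactSpace E] [NormedAddCommGroup F] [NormedSpace ℝ F]
    {S : Set E} (hS : IsOpen S) {h : E × ℝ → F} (hh : ContDiffOn ℝ 1 h (S ×ˢ Set.univ)) (a b : ℝ)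
    {x₀ : E} (hx₀ : x₀ ∈ S) :
    HasFDerivAt (fun x => ∫ t in a..b, h (x, t))
      (∫ t in a..b, (fderiv ℝ h (x₀, t)).comp (ContinuousLinearMap.inl ℝ E ℝ)) x₀ := by
  have hSo : IsOpen (S ×ˢ (Set.univ : Set ℝ)) := hS.prod isOpen_univ
  have hD : ContinuousOn (fun z => (fderiv ℝ h z).comp (ContinuousLinearMap.inl ℝ E ℝ))
      (S ×ˢ Set.univ) :=
    (hh.continuousOn_fderiv_of_isOpen hSo le_rfl).clm_comp continuousOn_const
  obtain ⟨k, hk, hkS, hkc⟩ := local_compact_nhds (hS.mem_nhds hx₀)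
  obtain ⟨C, hC⟩ := (hkc.prod (isCompact_uIcc (a := a) (b := b))).exists_bound_of_continuousOn
    (hD.mono (Set.prod_mono hkS (Set.subset_univ _)))
  have hline : ∀ x ∈ S, Continuous fun t => h (x, t) := fun x hx =>
    hh.continuousOn.comp_continuous (by fun_prop) fun t => ⟨hx, Set.mem_univ _⟩
  refine intervalIntegral.hasFDerivAt_integral_of_dominated_of_fderiv_le
    (F' := fun x t => (fderiv ℝ h (x, t)).comp (ContinuousLinearMap.inl ℝ E ℝ))
    (bound := fun _ => C) hk ?_ ?_ ?_ ?_ ?_ ?_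
  · filter_upwards [hk] with x hx using (hline x (hkS hx)).aestronglyMeasurable
  · exact (hline x₀ hx₀).intervalIntegrable _ _
  · exact (hD.comp_continuous (f := fun t : ℝ => (x₀, t)) (by fun_prop)
      fun t => ⟨hx₀, Set.mem_univ _⟩).aestronglyMeasurable
  · exact .of_forall fun t ht x hx => hC (x, t) ⟨hx, Set.uIoc_subset_uIcc ht⟩
  · exact intervalIntegrable_const
  · refine .of_forall fun t _ x hx => ?_
    have h1 : HasFDerivAt h (fderiv ℝ h (x, t)) (x, t) :=
      ((hh.differentiableOn one_ne_zero).differentiableAt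
        (hSo.mem_nhds ⟨hkS hx, Set.mem_univ t⟩)).hasFDerivAt
    exact h1.comp x (hasFDerivAt_prodMk_left x t)

/-- An interval integral is a `Cⁿ` function of a parameter if the integrand is jointly `Cⁿ`. -/
theorem contDiffOn_intervalIntegral_param {E : Type u} [NormedAddCommGroup E] [NormedSpace ℝ E]
    [LocallyCompactSpace E] {S : Set E} (hS : IsOpen S) (a b : ℝ) (n : ℕ) :
    ∀ {F : Type u} [NormedAddCommGroup F] [NormedSpace ℝ F] {h : E × ℝ → F},
      ContDiffOn ℝ n h (S ×ˢ Set.univ) → ContDiffOn ℝ n (fun x => ∫ t in a..b, h (x, t)) S := by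
  induction n with
  | zero =>
    intro F _ _ h hh
    simp only [Nat.cast_zero, contDiffOn_zero] at hh ⊢
    exact continuousOn_intervalIntegral_param hS hh a b
  | succ n ih =>
    intro F _ _ h hh
    have hSo : IsOpen (S ×ˢ (Set.univ : Set ℝ)) := hS.prod isOpen_univ
    have h1 : ContDiffOn ℝ 1 h (S ×ˢ Set.univ) := hh.of_le (by norm_cast; omega)
    have hder := fun x (hx : x ∈ S) => hasFDerivAt_intervalIntegral_param hS h1 a b hx
    push_cast at hh ⊢
    rw [contDiffOn_succ_iff_fderiv_of_isOpen hSo] at hh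
    rw [contDiffOn_succ_iff_fderiv_of_isOpen hS]
    refine ⟨fun x hx => (hder x hx).differentiableAt.differentiableWithinAt, by simp, ?_⟩
    exact (ih (hh.2.2.clm_comp contDiffOn_const)).congr fun x hx => (hder x hx).fderiv

/-- The primitive in the last variable of a jointly `Cⁿ` function is jointly `Cⁿ`. -/
theorem contDiffOn_primitive_snd {E F : Type u} [NormedAddCommGroup E] [NormedSpace ℝ E]
    [LocallyCompactSpace E] [NormedAddCommGroup F] [NormedSpace ℝ F]
    {S : Set E} (hS : IsOpen S) {n : ℕ} {ψ : E → ℝ → F}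
    (hψ : ContDiffOn ℝ n (fun z : E × ℝ => ψ z.1 z.2) (S ×ˢ Set.univ)) (θ₀ : ℝ) :
    ContDiffOn ℝ n (fun z : E × ℝ => ∫ θ in θ₀..z.2, ψ z.1 θ) (S ×ˢ Set.univ) := by
  have hint : ContDiffOn ℝ n (fun z : (E × ℝ) × ℝ => ψ z.1.1 (θ₀ + (z.1.2 - θ₀) * z.2))
      ((S ×ˢ Set.univ) ×ˢ Set.univ) :=
    hψ.comp (f := fun z : (E × ℝ) × ℝ => (z.1.1, θ₀ + (z.1.2 - θ₀) * z.2))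
      (ContDiff.contDiffOn (by fun_prop)) fun z hz => ⟨hz.1.1, Set.mem_univ _⟩
  have := contDiffOn_intervalIntegral_param (hS.prod isOpen_univ) 0 1 n hint
  have hsub : ContDiffOn ℝ n (fun z : E × ℝ => z.2 - θ₀) (S ×ˢ Set.univ) :=
    ContDiff.contDiffOn (by fun_prop)
  refine (hsub.smul this).congr fun z _ => ?_
  simp [intervalIntegral.smul_integral_comp_add_mul (fun θ => ψ z.1 θ)]

/-- If the partial derivative in the last variable is jointly `Cⁿ` and one section is `Cⁿ`, then
the function is jointly `Cⁿ`. -/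
theorem contDiffOn_of_hasDerivAt_snd {E F : Type u} [NormedAddCommGroup E] [NormedSpace ℝ E]
    [LocallyCompactSpace E] [NormedAddCommGroup F] [NormedSpace ℝ F] [CompleteSpace F]
    {S : Set E} (hS : IsOpen S) {n : ℕ} {φ ψ : E → ℝ → F} {θ₀ : ℝ}
    (hφ : ∀ x ∈ S, ∀ θ, HasDerivAt (φ x) (ψ x θ) θ)
    (hψ : ContDiffOn ℝ n (fun z : E × ℝ => ψ z.1 z.2) (S ×ˢ Set.univ))
    (hφ₀ : ContDiffOn ℝ n (fun x => φ x θ₀) S) :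
    ContDiffOn ℝ n (fun z : E × ℝ => φ z.1 z.2) (S ×ˢ Set.univ) := by
  refine ((hφ₀.comp contDiff_fst.contDiffOn fun z hz => hz.1).add
    (contDiffOn_primitive_snd hS hψ θ₀)).congr fun z hz => ?_
  have hcont : Continuous (ψ z.1) := hψ.continuousOn.comp_continuous
    (f := fun θ : ℝ => (z.1, θ)) (by fun_prop) fun θ => ⟨hz.1, Set.mem_univ _⟩
  simp [intervalIntegral.integral_eq_sub_of_hasDerivAt (fun θ _ => hφ z.1 hz.1 θ)
    (hcont.intervalIntegrable θ₀ z.2)]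

/-- If the partial derivative in the last variable is jointly `Cⁿ` and the integral over a
nontrivial interval vanishes, then the function is jointly `Cⁿ`. -/
theorem contDiffOn_of_hasDerivAt_snd_of_integral_eq_zero {E F : Type u} [NormedAddCommGroup E]
    [NormedSpace ℝ E] [LocallyCompactSpace E] [NormedAddCommGroup F] [NormedSpace ℝ F]
    [CompleteSpace F] {S : Set E} (hS : IsOpen S) {n : ℕ} {φ ψ : E → ℝ → F} {a b : ℝ}
    (hab : a ≠ b) (hφ : ∀ x ∈ S, ∀ θ, HasDerivAt (φ x) (ψ x θ) θ)
    (hψ : ContDiffOn ℝ n (fun z : E × ℝ => ψ z.1 z.2) (S ×ˢ Set.univ))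
    (hφ₀ : ∀ x ∈ S, ∫ θ in a..b, φ x θ = 0) :
    ContDiffOn ℝ n (fun z : E × ℝ => φ z.1 z.2) (S ×ˢ Set.univ) := by
  refine contDiffOn_of_hasDerivAt_snd hS hφ hψ (θ₀ := a) ?_
  refine (contDiffOn_const (c := -(b - a)⁻¹)).smul (contDiffOn_intervalIntegral_param hS a b n
    (contDiffOn_primitive_snd hS hψ a)) |>.congr fun x hx => ?_
  have hcont : Continuous (ψ x) := hψ.continuousOn.comp_continuous
    (f := fun θ : ℝ => (x, θ)) (by fun_prop) fun θ => ⟨hx, Set.mem_univ _⟩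
  have hφc : Continuous (φ x) := continuous_iff_continuousAt.2 fun θ => (hφ x hx θ).continuousAt
  have hprim : ∀ θ, ∫ η in a..θ, ψ x η = φ x θ - φ x a := fun θ =>
    intervalIntegral.integral_eq_sub_of_hasDerivAt (fun η _ => hφ x hx η)
      (hcont.intervalIntegrable a θ)
  have hba : b - a ≠ 0 := sub_ne_zero.2 hab.symm
  simp only [Pi.smul_apply', hprim]
  rw [intervalIntegral.integral_sub (hφc.intervalIntegrable _ _) intervalIntegrable_const,
    hφ₀ x hx, intervalIntegral.integral_const, zero_sub, smul_neg, neg_smul, neg_neg,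
    inv_smul_smul₀ hba]

/-- The differential of a function on a product, in terms of its partial derivatives. -/
theorem fderiv_prod_apply_eq_of_partial {E F : Type*} [NormedAddCommGroup E] [NormedSpace ℝ E]
    [NormedAddCommGroup F] [NormedSpace ℝ F] {φ : E → ℝ → F} {x : E} {θ : ℝ}
    (hφ : DifferentiableAt ℝ (fun z : E × ℝ => φ z.1 z.2) (x, θ)) {A : E →L[ℝ] F} {B : F}
    (hA : HasFDerivAt (fun x' => φ x' θ) A x) (hB : HasDerivAt (φ x) B θ) (X : E) (Y : ℝ) :
    fderiv ℝ (fun z : E × ℝ => φ z.1 z.2) (x, θ) (X, Y) = A X + Y • B := by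
  have h1 := hφ.hasFDerivAt.comp x (hasFDerivAt_prodMk_left (𝕜 := ℝ) x θ)
  have h2 := hφ.hasFDerivAt.comp θ (hasFDerivAt_prodMk_right (𝕜 := ℝ) x θ)
  have e1 := congrArg (fun l => l X) (h1.unique hA)
  have e2 := congrArg (fun l => l Y) (h2.unique hB.hasFDerivAt)
  simp only [ContinuousLinearMap.comp_apply, ContinuousLinearMap.inl_apply,
    ContinuousLinearMap.inr_apply, ContinuousLinearMap.toSpanSingleton_apply] at e1 e2
  rw [← e1, ← e2, ← map_add]
  simp

/-- The derivative of a jointly `C¹` function along a vector field is `Cⁿ`. -/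
theorem contDiffOn_lieDeriv_of_partial {E F : Type*} [NormedAddCommGroup E] [NormedSpace ℝ E]
    [NormedAddCommGroup F] [NormedSpace ℝ F] {S : Set E} (hS : IsOpen S) {n : ℕ}
    {φ φθ : E → ℝ → F} {φI : E → ℝ → E →L[ℝ] F}
    (hφ : ContDiffOn ℝ (n + 1 : ℕ) (fun z : E × ℝ => φ z.1 z.2) (S ×ˢ Set.univ))
    (hI : ∀ x ∈ S, ∀ θ, HasFDerivAt (fun x' => φ x' θ) (φI x θ) x)
    (hθ : ∀ x ∈ S, ∀ θ, HasDerivAt (φ x) (φθ x θ) θ) {X : E → ℝ → E} {Y : E → ℝ → ℝ}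
    (hX : ContDiffOn ℝ n (fun z : E × ℝ => X z.1 z.2) (S ×ˢ Set.univ))
    (hY : ContDiffOn ℝ n (fun z : E × ℝ => Y z.1 z.2) (S ×ˢ Set.univ)) :
    ContDiffOn ℝ n (fun z : E × ℝ => φI z.1 z.2 (X z.1 z.2) + Y z.1 z.2 • φθ z.1 z.2)
      (S ×ˢ Set.univ) := by
  have hSo : IsOpen (S ×ˢ (Set.univ : Set ℝ)) := hS.prod isOpen_univ
  refine ((hφ.fderiv_of_isOpen hSo (by norm_cast)).clm_apply (hX.prodMk hY)).congr
    fun z hz => ?_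
  exact (fderiv_prod_apply_eq_of_partial
    (((hφ.differentiableOn (by simp))).differentiableAt (hSo.mem_nhds hz))
    (hI z.1 hz.1 z.2) (hθ z.1 hz.1 z.2) _ _).symm

/-- The chain rule along a curve, in terms of partial derivatives. -/
theorem hasDerivAt_comp_curve_of_partial {E F : Type*} [NormedAddCommGroup E] [NormedSpace ℝ E]
    [NormedAddCommGroup F] [NormedSpace ℝ F] {S : Set E} (hS : IsOpen S)
    {φ : E → ℝ → F} (hφ : ContDiffOn ℝ 1 (fun z : E × ℝ => φ z.1 z.2) (S ×ˢ Set.univ))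
    {x : ℝ → E} {θ : ℝ → ℝ} {t : ℝ} {X : E} {Y : ℝ} (hx : HasDerivAt x X t)
    (hθ : HasDerivAt θ Y t) (hxS : x t ∈ S) {A : E →L[ℝ] F} {B : F}
    (hA : HasFDerivAt (fun x' => φ x' (θ t)) A (x t)) (hB : HasDerivAt (φ (x t)) B (θ t)) :
    HasDerivAt (fun t' => φ (x t') (θ t')) (A X + Y • B) t := by
  have hd : DifferentiableAt ℝ (fun z : E × ℝ => φ z.1 z.2) (x t, θ t) :=
    (hφ.differentiableOn one_ne_zero).differentiableAt
      ((hS.prod isOpen_univ).mem_nhds ⟨hxS, Set.mem_univ _⟩)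
  rw [← fderiv_prod_apply_eq_of_partial hd hA hB]
  exact hd.hasFDerivAt.comp_hasDerivAt t (hx.prodMk hθ)

/-- The derivative of a curve after a linear change of time. -/
theorem hasDerivAt_comp_const_mul {F : Type*} [NormedAddCommGroup F] [NormedSpace ℝ F]
    (c : ℝ) {y : ℝ → F} {y' : F} {t : ℝ} (hy : HasDerivAt y y' (c * t)) :
    HasDerivAt (fun t' => y (c * t')) (c • y') t := by
  simpa [Function.comp_def] using hy.scomp t (h := fun t' => c * t') ((hasDerivAt_id' t).const_mul c)

/-- The product rule for a matrix acting on a vector. -/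
theorem hasDerivWithinAt_mulVec {ι κ : Type*} [Fintype ι] [Fintype κ] {A : ℝ → Matrix ι κ ℝ}
    {A' : Matrix ι κ ℝ} {x : ℝ → κ → ℝ} {x' : κ → ℝ} {S : Set ℝ} {t : ℝ}
    (hA : ∀ i j, HasDerivWithinAt (fun t' => A t' i j) (A' i j) S t)
    (hx : HasDerivWithinAt x x' S t) :
    HasDerivWithinAt (fun t' => A t' *ᵥ x t') (A' *ᵥ x t + A t *ᵥ x') S t := by
  rw [hasDerivWithinAt_pi] at hx ⊢
  intro i
  simp only [Matrix.mulVec, dotProduct, Pi.add_apply, ← Finset.sum_add_distrib]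
  exact HasDerivWithinAt.fun_sum fun j _ => (hA i j).mul (hx j)

/-- A continuous family of matrices over a compact set is uniformly bounded. -/
theorem exists_norm_mulVec_le_of_continuousOn {ι κ : Type*} [Fintype ι] [Fintype κ]
    {A : ℝ → Matrix ι κ ℝ} {S : Set ℝ} (hS : IsCompact S) (hA : ContinuousOn A S) :
    ∃ C, ∀ t ∈ S, ∀ x : κ → ℝ, ‖A t *ᵥ x‖ ≤ C * ‖x‖ := by
  classical
  let T : Matrix ι κ ℝ →ₗ[ℝ] ((κ → ℝ) →L[ℝ] (ι → ℝ)) :=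
    LinearMap.toContinuousLinearMap.toLinearMap ∘ₗ Matrix.toLin'.toLinearMap
  have hT : Continuous T := T.continuous_of_finiteDimensional
  obtain ⟨C, hC⟩ := hS.exists_bound_of_continuousOn (hT.comp_continuousOn hA)
  exact ⟨C, fun t ht x => (T (A t)).le_of_opNorm_le (hC t ht) x⟩

/-- A solution of a homogeneous linear system vanishing at the left endpoint vanishes
identically. -/
theorem eq_zero_of_hasDerivWithinAt_mulVec {ι : Type*} [Fintype ι] {A : ℝ → Matrix ι ι ℝ}
    {x : ℝ → ι → ℝ} {T : ℝ} (hA : ContinuousOn A (Set.Icc 0 T))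
    (hx : ContinuousOn x (Set.Icc 0 T))
    (hx' : ∀ t ∈ Set.Ico 0 T, HasDerivWithinAt x (A t *ᵥ x t) (Set.Ici t) t) (hx0 : x 0 = 0) :
    ∀ t ∈ Set.Icc 0 T, x t = 0 := by
  obtain ⟨C, hC⟩ := exists_norm_mulVec_le_of_continuousOn isCompact_Icc hA
  exact eq_zero_of_abs_deriv_le_mul_abs_self_of_eq_zero_right hx hx' hx0
    fun t ht => hC t (Set.Ico_subset_Icc_self ht) _

/-- A fundamental matrix of a linear system is invertible at all later times. -/
theorem det_ne_zero_of_hasDerivAt_mul {ι : Type*} [Fintype ι] [DecidableEq ι]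
    {A R : ℝ → Matrix ι ι ℝ} {T : ℝ} (hT : 0 ≤ T) (hA : ContinuousOn A (Set.Icc 0 T))
    (hR : ∀ t ∈ Set.Icc 0 T, ∀ i j, HasDerivAt (fun t' => R t' i j) ((A t * R t) i j) t)
    (hR0 : R 0 = 1) : (R T).det ≠ 0 := by
  intro hdet
  obtain ⟨c, hc, hRc⟩ := Matrix.exists_mulVec_eq_zero_iff.2 hdet
  have hmaps : Set.MapsTo (fun t => T - t) (Set.Icc 0 T) (Set.Icc 0 T) := fun t ht =>
    ⟨by linarith [ht.2], by linarith [ht.1]⟩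
  have hder : ∀ t ∈ Set.Icc 0 T,
      HasDerivAt (fun t' => R (T - t') *ᵥ c) (-A (T - t) *ᵥ (R (T - t) *ᵥ c)) t := by
    intro t ht
    have h1 : ∀ i j, HasDerivWithinAt (fun t' => R (T - t') i j)
        ((-(A (T - t) * R (T - t))) i j) Set.univ t := fun i j => by
      simpa using HasDerivAt.comp_const_sub T t (hR _ (hmaps ht) i j)
    have := hasDerivWithinAt_mulVec h1 (hasDerivWithinAt_const t Set.univ c)
    simpa [hasDerivWithinAt_univ, Matrix.neg_mulVec] using this
  have := eq_zero_of_hasDerivWithinAt_mulVec (A := fun t => -A (T - t))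
    ((hA.comp (by fun_prop) hmaps).neg) (fun t ht => (hder t ht).continuousAt.continuousWithinAt)
    (fun t ht => (hder t (Set.Ico_subset_Icc_self ht)).hasDerivWithinAt) (by simpa using hRc)
    T ⟨hT, le_rfl⟩
  simp [hR0] at this
  exact hc this

/-- **Variation of constants** for a linear system with zero initial datum. -/
theorem eq_mulVec_integral_of_hasDerivAt {ι : Type*} [Fintype ι] [DecidableEq ι]
    {A R : ℝ → Matrix ι ι ℝ} {x b : ℝ → ι → ℝ} {T : ℝ} (hT : 0 ≤ T)
    (hA : ContinuousOn A (Set.Icc 0 T))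
    (hR : ∀ t ∈ Set.Icc 0 T, ∀ i j, HasDerivAt (fun t' => R t' i j) ((A t * R t) i j) t)
    (hR0 : R 0 = 1) (hx : ∀ t ∈ Set.Icc 0 T, HasDerivAt x (A t *ᵥ x t + b t) t)
    (hx0 : x 0 = 0) (hb : ContinuousOn b (Set.Icc 0 T)) :
    x T = R T *ᵥ ∫ t in (0 : ℝ)..T, (R t)⁻¹ *ᵥ b t := by
  have hRc : ContinuousOn R (Set.Icc 0 T) := by
    refine continuousOn_pi.2 fun i => continuousOn_pi.2 fun j t ht => ?_
    exact (hR t ht i j).continuousAt.continuousWithinAt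
  have hdet : ∀ t ∈ Set.Icc 0 T, (R t).det ≠ 0 := fun t ht =>
    det_ne_zero_of_hasDerivAt_mul ht.1 (hA.mono (Set.Icc_subset_Icc_right ht.2))
      (fun t' ht' => hR t' (Set.Icc_subset_Icc_right ht.2 ht')) hR0
  have hinv : ContinuousOn (fun t => (R t)⁻¹ *ᵥ b t) (Set.Icc 0 T) := by
    have hRinv : ContinuousOn (fun t => (R t)⁻¹) (Set.Icc 0 T) := by
      simp only [Matrix.inv_def, Ring.inverse_eq_inv']
      exact ((continuous_id.matrix_det.comp_continuousOn hRc).inv₀ hdet).smul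
        (continuous_id.matrix_adjugate.comp_continuousOn hRc)
    exact (Continuous.matrix_mulVec continuous_fst continuous_snd).comp_continuousOn
      (hRinv.prodMk hb)
  have hint : ∀ t ∈ Set.Icc 0 T,
      IntervalIntegrable (fun t => (R t)⁻¹ *ᵥ b t) volume 0 t := fun t ht =>
    (hinv.mono (by rw [Set.uIcc_of_le ht.1]; exact Set.Icc_subset_Icc_right ht.2)).intervalIntegrable
  have hprim : ContinuousOn (fun t => ∫ t' in (0 : ℝ)..t, (R t')⁻¹ *ᵥ b t') (Set.Icc 0 T) := by
    have := intervalIntegral.continuousOn_primitive_interval' (hint T ⟨hT, le_rfl⟩)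
      Set.left_mem_uIcc
    rwa [Set.uIcc_of_le hT] at this
  have hzero := eq_zero_of_hasDerivWithinAt_mulVec
    (x := fun t => x t - R t *ᵥ ∫ t' in (0 : ℝ)..t, (R t')⁻¹ *ᵥ b t') hA ?_ ?_ (by simp [hx0])
    T ⟨hT, le_rfl⟩
  · exact sub_eq_zero.1 hzero
  · exact ContinuousOn.sub (fun t ht => (hx t ht).continuousAt.continuousWithinAt)
      ((Continuous.matrix_mulVec continuous_fst continuous_snd).comp_continuousOn
        (hRc.prodMk hprim))
  · intro t ht
    have ht' := Set.Ico_subset_Icc_self ht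
    have hmem : Set.Icc 0 T ∈ nhdsWithin t (Set.Ioi t) :=
      Filter.mem_of_superset (Ioc_mem_nhdsGT ht.2) fun y hy => ⟨ht.1.trans hy.1.le, hy.2⟩
    have hI : HasDerivWithinAt (fun t => ∫ t' in (0 : ℝ)..t, (R t')⁻¹ *ᵥ b t')
        ((R t)⁻¹ *ᵥ b t) (Set.Ici t) t :=
      intervalIntegral.integral_hasDerivWithinAt_right (hint t ht') (t := Set.Ioi t)
        ⟨_, hmem, hinv.aestronglyMeasurable measurableSet_Icc⟩
        ((hinv t ht').mono_of_mem_nhdsWithin hmem)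
    refine ((hx t ht').hasDerivWithinAt.sub
      (hasDerivWithinAt_mulVec (fun i j => (hR t ht' i j).hasDerivWithinAt) hI)).congr_deriv ?_
    rw [Matrix.mulVec_mulVec, Matrix.mul_nonsing_inv _ (hdet t ht').isUnit, Matrix.one_mulVec,
      Matrix.mulVec_sub, Matrix.mulVec_mulVec]
    abel

/-- **The integral equation for the error of one-frequency averaging**
(Lemma 2B of Morosi–Pizzocchero).  The space of actions is `ℝ^d = Fin d → ℝ`,
the angle is modelled by a real variable with all functions `2π`-periodic in it.
`f, g, ω` are the data of the perturbed one-frequency system, `f̄` the averaged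
vector field, `J` the averaged solution on `[0,U)` (`U ∈ (0,∞]` an `EReal`),
`R, K` the solutions of the linear auxiliary systems, `s, p, v, q, w, u, 𝓜, 𝓖, 𝓗`
the auxiliary functions of the scheme (given along with the derivative witnesses
`sθ, sI`, etc.), and `(Ifun, Θ)` the solution of the perturbed system on
`[0, U/ε)`, with the segment `[J(εt), Ifun(t)]` inside `Λ`.  Then the error
`L(t) = ε⁻¹ (Ifun(t) − J(εt))` satisfies the stated integral equation. -/
theorem averaging_error_integral_equation
    {d : ℕ} (hd : 1 ≤ d)
    (Λ : Set (Fin d → ℝ)) (hΛ : IsOpen Λ)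
    (m : ℕ) (hm : 2 ≤ m)
    (f : (Fin d → ℝ) → ℝ → Fin d → ℝ)
    (g : (Fin d → ℝ) → ℝ → ℝ)
    (ω : (Fin d → ℝ) → ℝ)
    (hf : ContDiffOn ℝ m (fun p : (Fin d → ℝ) × ℝ => f p.1 p.2) (Λ ×ˢ Set.univ))
    (hfper : ∀ I θ, f I (θ + 2 * π) = f I θ)
    (hg : ContDiffOn ℝ m (fun p : (Fin d → ℝ) × ℝ => g p.1 p.2) (Λ ×ˢ Set.univ))
    (hgper : ∀ I θ, g I (θ + 2 * π) = g I θ)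
    (hω : ContDiffOn ℝ m ω Λ)
    (hωne : ∀ I ∈ Λ, ω I ≠ 0)
    (I₀ : Fin d → ℝ) (hI₀ : I₀ ∈ Λ) (θ₀ : ℝ)
    (ε : ℝ) (hε : 0 < ε)
    -- the averaged vector field
    (fbar : (Fin d → ℝ) → Fin d → ℝ)
    (hfbar : ∀ I, fbar I = (2 * π)⁻¹ • ∫ θ in (0:ℝ)..2 * π, f I θ)
    -- the averaged solution on [0,U)
    (U : EReal) (hU : 0 < U)
    (J : ℝ → Fin d → ℝ)
    (hJ0 : J 0 = I₀)
    (hJmem : ∀ τ : ℝ, 0 ≤ τ → (τ : EReal) < U → J τ ∈ Λ)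
    (hJode : ∀ τ : ℝ, 0 ≤ τ → (τ : EReal) < U → HasDerivAt J (fbar (J τ)) τ)
    -- the Jacobian ∂f̄/∂I
    (F' : (Fin d → ℝ) → Matrix (Fin d) (Fin d) ℝ)
    (hF' : ∀ I ∈ Λ, HasFDerivAt fbar (Matrix.mulVecLin (F' I)).toContinuousLinearMap I)
    -- the auxiliary function s :  f = f̄ + ω ∂s/∂θ,  s̄ = 0
    (s sθ : (Fin d → ℝ) → ℝ → Fin d → ℝ)
    (hsθ : ∀ I ∈ Λ, ∀ θ : ℝ, HasDerivAt (fun θ' => s I θ') (sθ I θ) θ)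
    (hs : ∀ I ∈ Λ, ∀ θ : ℝ, f I θ = fbar I + ω I • sθ I θ)
    (hsavg : ∀ I ∈ Λ, (∫ θ in (0:ℝ)..2 * π, s I θ) = 0)
    (sI : (Fin d → ℝ) → ℝ → Matrix (Fin d) (Fin d) ℝ)
    (hsI : ∀ I ∈ Λ, ∀ θ : ℝ,
      HasFDerivAt (fun I' => s I' θ) (Matrix.mulVecLin (sI I θ)).toContinuousLinearMap I)
    -- p := (∂s/∂I) f + (∂s/∂θ) g  and its average p̄
    (p : (Fin d → ℝ) → ℝ → Fin d → ℝ)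
    (hp : ∀ I ∈ Λ, ∀ θ : ℝ, p I θ = sI I θ *ᵥ f I θ + g I θ • sθ I θ)
    (pbar : (Fin d → ℝ) → Fin d → ℝ)
    (hpbar : ∀ I ∈ Λ, pbar I = (2 * π)⁻¹ • ∫ θ in (0:ℝ)..2 * π, p I θ)
    -- R and K : solutions of the linear auxiliary systems
    (R : ℝ → Matrix (Fin d) (Fin d) ℝ)
    (hR0 : R 0 = 1)
    (hRode : ∀ τ : ℝ, 0 ≤ τ → (τ : EReal) < U → ∀ i j,
      HasDerivAt (fun τ' => R τ' i j) ((F' (J τ) * R τ) i j) τ)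
    (K : ℝ → Fin d → ℝ)
    (hK0 : K 0 = 0)
    (hKode : ∀ τ : ℝ, 0 ≤ τ → (τ : EReal) < U →
      HasDerivAt K (F' (J τ) *ᵥ K τ + pbar (J τ)) τ)
    -- v :  s = ω ∂v/∂θ,  v(I,θ₀) = 0
    (v vθ : (Fin d → ℝ) → ℝ → Fin d → ℝ)
    (hvθ : ∀ I ∈ Λ, ∀ θ : ℝ, HasDerivAt (fun θ' => v I θ') (vθ I θ) θ)
    (hv : ∀ I ∈ Λ, ∀ θ : ℝ, s I θ = ω I • vθ I θ)
    (hv0 : ∀ I ∈ Λ, v I θ₀ = 0)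
    (vI : (Fin d → ℝ) → ℝ → Matrix (Fin d) (Fin d) ℝ)
    (hvI : ∀ I ∈ Λ, ∀ θ : ℝ,
      HasFDerivAt (fun I' => v I' θ) (Matrix.mulVecLin (vI I θ)).toContinuousLinearMap I)
    -- q := (∂v/∂I) f + (∂v/∂θ) g
    (q : (Fin d → ℝ) → ℝ → Fin d → ℝ)
    (hq : ∀ I ∈ Λ, ∀ θ : ℝ, q I θ = vI I θ *ᵥ f I θ + g I θ • vθ I θ)
    -- w :  p = p̄ + ω ∂w/∂θ,  w(I,θ₀) = 0
    (w wθ : (Fin d → ℝ) → ℝ → Fin d → ℝ)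
    (hwθ : ∀ I ∈ Λ, ∀ θ : ℝ, HasDerivAt (fun θ' => w I θ') (wθ I θ) θ)
    (hw : ∀ I ∈ Λ, ∀ θ : ℝ, p I θ = pbar I + ω I • wθ I θ)
    (hw0 : ∀ I ∈ Λ, w I θ₀ = 0)
    (wI : (Fin d → ℝ) → ℝ → Matrix (Fin d) (Fin d) ℝ)
    (hwI : ∀ I ∈ Λ, ∀ θ : ℝ,
      HasFDerivAt (fun I' => w I' θ) (Matrix.mulVecLin (wI I θ)).toContinuousLinearMap I)
    -- u := (∂w/∂I) f + (∂w/∂θ) g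
    (u : (Fin d → ℝ) → ℝ → Fin d → ℝ)
    (hu : ∀ I ∈ Λ, ∀ θ : ℝ, u I θ = wI I θ *ᵥ f I θ + g I θ • wθ I θ)
    -- the second derivative ∂²f̄/∂I² and 𝓜 := (∂²f̄/∂I²) f̄ − (∂f̄/∂I)²
    (F'' : (Fin d → ℝ) → Fin d → Fin d → Fin d → ℝ)
    (hF'' : ∀ I ∈ Λ, ∀ i k, HasFDerivAt (fun I' => F' I' i k)
      (∑ j, F'' I i j k • (ContinuousLinearMap.proj j : (Fin d → ℝ) →L[ℝ] ℝ)) I)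
    (𝓜 : (Fin d → ℝ) → Matrix (Fin d) (Fin d) ℝ)
    (h𝓜 : ∀ I ∈ Λ, ∀ i k, 𝓜 I i k = (∑ j, F'' I i j k * fbar I j) - (F' I * F' I) i k)
    -- 𝓖 and 𝓗 on Λ†
    (𝓖 : (Fin d → ℝ) → (Fin d → ℝ) → Matrix (Fin d) (Fin d) ℝ)
    (h𝓖 : ∀ I δI : Fin d → ℝ, segment ℝ I (I + δI) ⊆ Λ →
      pbar (I + δI) = pbar I + 𝓖 I δI *ᵥ δI)
    (𝓗 : (Fin d → ℝ) → (Fin d → ℝ) → Fin d → Fin d → Fin d → ℝ)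
    (h𝓗 : ∀ I δI : Fin d → ℝ, segment ℝ I (I + δI) ⊆ Λ →
      fbar (I + δI) = fbar I + F' I *ᵥ δI +
        (1/2 : ℝ) • (fun i => ∑ j, ∑ k, 𝓗 I δI i j k * δI j * δI k))
    (h𝓗symm : ∀ I δI : Fin d → ℝ, segment ℝ I (I + δI) ⊆ Λ →
      ∀ i j k, 𝓗 I δI i j k = 𝓗 I δI i k j)
    -- the perturbed solution on [0, U/ε)
    (Ifun : ℝ → Fin d → ℝ) (Θ : ℝ → ℝ)
    (hIinit : Ifun 0 = I₀) (hΘinit : Θ 0 = θ₀)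
    (hImem : ∀ t : ℝ, 0 ≤ t → ((ε * t : ℝ) : EReal) < U → Ifun t ∈ Λ)
    (hseg : ∀ t : ℝ, 0 ≤ t → ((ε * t : ℝ) : EReal) < U →
      segment ℝ (J (ε * t)) (Ifun t) ⊆ Λ)
    (hIode : ∀ t : ℝ, 0 ≤ t → ((ε * t : ℝ) : EReal) < U →
      HasDerivAt Ifun (ε • f (Ifun t) (Θ t)) t)
    (hΘode : ∀ t : ℝ, 0 ≤ t → ((ε * t : ℝ) : EReal) < U →
      HasDerivAt Θ (ω (Ifun t) + ε * g (Ifun t) (Θ t)) t)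
    -- the error function
    (L : ℝ → Fin d → ℝ)
    (hL : ∀ t, L t = ε⁻¹ • (Ifun t - J (ε * t))) :
    ∀ t : ℝ, 0 ≤ t → ((ε * t : ℝ) : EReal) < U →
      L t = s (Ifun t) (Θ t) - R (ε * t) *ᵥ s I₀ θ₀ - K (ε * t)
        - ε • (w (Ifun t) (Θ t) - F' (J (ε * t)) *ᵥ v (Ifun t) (Θ t))
        + ε ^ 2 • (R (ε * t) *ᵥ ∫ t' in (0:ℝ)..t,
            (R (ε * t'))⁻¹ *ᵥ
              (u (Ifun t') (Θ t')
                - F' (J (ε * t')) *ᵥ (w (Ifun t') (Θ t') + q (Ifun t') (Θ t'))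
                - 𝓜 (J (ε * t')) *ᵥ v (Ifun t') (Θ t')
                - 𝓖 (J (ε * t')) (ε • L t') *ᵥ L t'
                + (1/2 : ℝ) • fun i => ∑ j, ∑ k,
                    𝓗 (J (ε * t')) (ε • L t') i j k * L t' j * L t' k)) := by
  intro T hT hTU
  -- regularity of the auxiliary functions
  have hΛo : IsOpen (Λ ×ˢ (Set.univ : Set ℝ)) := hΛ.prod isOpen_univ
  have hf2 : ContDiffOn ℝ (2 : ℕ) (fun z : (Fin d → ℝ) × ℝ => f z.1 z.2) (Λ ×ˢ Set.univ) :=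
    hf.of_le (by exact_mod_cast hm)
  have hg2 : ContDiffOn ℝ (2 : ℕ) (fun z : (Fin d → ℝ) × ℝ => g z.1 z.2) (Λ ×ˢ Set.univ) :=
    hg.of_le (by exact_mod_cast hm)
  have hω2 : ContDiffOn ℝ (2 : ℕ) ω Λ := hω.of_le (by exact_mod_cast hm)
  have hlift : ∀ {n : ℕ} {F : Type} [NormedAddCommGroup F] [NormedSpace ℝ F]
      {φ : (Fin d → ℝ) → F}, ContDiffOn ℝ n φ Λ →
      ContDiffOn ℝ n (fun z : (Fin d → ℝ) × ℝ => φ z.1) (Λ ×ˢ Set.univ) := fun hφ =>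
    hφ.comp contDiff_fst.contDiffOn fun z hz => hz.1
  have hdiv : ∀ {n : ℕ} {φ ψ : (Fin d → ℝ) → ℝ → Fin d → ℝ}, n ≤ 2 →
      ContDiffOn ℝ n (fun z : (Fin d → ℝ) × ℝ => φ z.1 z.2) (Λ ×ˢ Set.univ) →
      (∀ I ∈ Λ, ∀ θ, φ I θ = ω I • ψ I θ) →
      ContDiffOn ℝ n (fun z : (Fin d → ℝ) × ℝ => ψ z.1 z.2) (Λ ×ˢ Set.univ) := by
    intro n φ ψ hn hφ h
    refine (((hlift (hω2.of_le (by exact_mod_cast hn))).inv fun z hz => hωne z.1 hz.1).smul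
      hφ).congr fun z hz => ?_
    simp [h z.1 hz.1 z.2, smul_smul, hωne z.1 hz.1]
  have hfbar2 : ContDiffOn ℝ (2 : ℕ) fbar Λ :=
    ((contDiffOn_const (c := (2 * π)⁻¹)).smul
      (contDiffOn_intervalIntegral_param hΛ 0 (2 * π) 2 hf2)).congr fun I _ => hfbar I
  have hsθ2 : ContDiffOn ℝ (2 : ℕ) (fun z : (Fin d → ℝ) × ℝ => sθ z.1 z.2) (Λ ×ˢ Set.univ) :=
    hdiv (φ := fun I θ => f I θ - fbar I) le_rfl (hf2.sub (hlift hfbar2))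
      fun I hI θ => by simp [hs I hI θ]
  have hs2 : ContDiffOn ℝ (2 : ℕ) (fun z : (Fin d → ℝ) × ℝ => s z.1 z.2) (Λ ×ˢ Set.univ) :=
    contDiffOn_of_hasDerivAt_snd_of_integral_eq_zero hΛ Real.two_pi_pos.ne hsθ hsθ2 hsavg
  have hvθ2 : ContDiffOn ℝ (2 : ℕ) (fun z : (Fin d → ℝ) × ℝ => vθ z.1 z.2) (Λ ×ˢ Set.univ) :=
    hdiv le_rfl hs2 hv
  have hv2 : ContDiffOn ℝ (2 : ℕ) (fun z : (Fin d → ℝ) × ℝ => v z.1 z.2) (Λ ×ˢ Set.univ) :=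
    contDiffOn_of_hasDerivAt_snd hΛ hvθ hvθ2 (contDiffOn_const.congr hv0)
  have hf1 := hf2.of_le (show ((1 : ℕ) : WithTop ℕ∞) ≤ (2 : ℕ) by norm_cast)
  have hg1 := hg2.of_le (show ((1 : ℕ) : WithTop ℕ∞) ≤ (2 : ℕ) by norm_cast)
  have hp1 : ContDiffOn ℝ (1 : ℕ) (fun z : (Fin d → ℝ) × ℝ => p z.1 z.2) (Λ ×ˢ Set.univ) :=
    (contDiffOn_lieDeriv_of_partial hΛ hs2 hsI hsθ hf1 hg1).congr fun z hz => hp z.1 hz.1 z.2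
  have hpbar1 : ContDiffOn ℝ (1 : ℕ) pbar Λ :=
    ((contDiffOn_const (c := (2 * π)⁻¹)).smul
      (contDiffOn_intervalIntegral_param hΛ 0 (2 * π) 1 hp1)).congr hpbar
  have hwθ1 : ContDiffOn ℝ (1 : ℕ) (fun z : (Fin d → ℝ) × ℝ => wθ z.1 z.2) (Λ ×ˢ Set.univ) :=
    hdiv (φ := fun I θ => p I θ - pbar I) one_le_two (hp1.sub (hlift hpbar1))
      fun I hI θ => by simp [hw I hI θ]
  have hw1 : ContDiffOn ℝ (1 : ℕ) (fun z : (Fin d → ℝ) × ℝ => w z.1 z.2) (Λ ×ˢ Set.univ) :=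
    contDiffOn_of_hasDerivAt_snd hΛ hwθ hwθ1 (contDiffOn_const.congr hw0)
  have hq1 : ContDiffOn ℝ (1 : ℕ) (fun z : (Fin d → ℝ) × ℝ => q z.1 z.2) (Λ ×ˢ Set.univ) :=
    (contDiffOn_lieDeriv_of_partial hΛ hv2 hvI hvθ hf1 hg1).congr fun z hz => hq z.1 hz.1 z.2
  have hf0 := hf2.of_le (show ((0 : ℕ) : WithTop ℕ∞) ≤ (2 : ℕ) by norm_cast)
  have hg0 := hg2.of_le (show ((0 : ℕ) : WithTop ℕ∞) ≤ (2 : ℕ) by norm_cast)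
  have hu0 : ContDiffOn ℝ (0 : ℕ) (fun z : (Fin d → ℝ) × ℝ => u z.1 z.2) (Λ ×ˢ Set.univ) :=
    (contDiffOn_lieDeriv_of_partial hΛ hw1 hwI hwθ hf0 hg0).congr fun z hz => hu z.1 hz.1 z.2
  have hF'1 : ∀ i k, ContDiffOn ℝ (1 : ℕ) (fun I => F' I i k) Λ := by
    intro i k
    refine (contDiffOn_pi.1 ((hfbar2.fderiv_of_isOpen (m := (1 : ℕ)) hΛ (by norm_cast)).clm_apply
      (contDiffOn_const (c := (Pi.single k 1 : Fin d → ℝ)))) i).congr fun I hI => ?_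
    rw [(hF' I hI).fderiv]
    simp
  have hF''0 : ∀ i j k, ContinuousOn (fun I => F'' I i j k) Λ := by
    intro i j k
    refine (((hF'1 i k).continuousOn_fderiv_of_isOpen hΛ (by norm_cast)).clm_apply
      (continuousOn_const (c := (Pi.single j 1 : Fin d → ℝ)))).congr fun I hI => ?_
    change _ = fderiv ℝ (fun I' => F' I' i k) I (Pi.single j 1)
    rw [(hF'' I hI i k).fderiv]
    simp [Pi.single_apply]
  have hF'c : ContinuousOn F' Λ :=
    continuousOn_pi.2 fun i => continuousOn_pi.2 fun k => (hF'1 i k).continuousOn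
  have h𝓜c : ContinuousOn 𝓜 Λ := by
    refine continuousOn_pi.2 fun i => continuousOn_pi.2 fun k => ?_
    have h1 : ContinuousOn (fun I => (∑ j, F'' I i j k * fbar I j) - (F' I * F' I) i k) Λ := by
      refine (continuousOn_finsetSum _ fun j _ => (hF''0 i j k).mul
        (continuousOn_pi.1 hfbar2.continuousOn j)).sub ?_
      have h2 : Continuous fun M : Matrix (Fin d) (Fin d) ℝ => (M * M) i k :=
        (continuous_id.matrix_mul continuous_id).matrix_elem i k
      exact h2.comp_continuousOn hF'c
    exact h1.congr fun I hI => h𝓜 I hI i k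
  -- the curves on `[0, T]`
  have hlt : ∀ t ∈ Set.Icc 0 T, ((ε * t : ℝ) : EReal) < U := fun t ht =>
    lt_of_le_of_lt (by exact_mod_cast mul_le_mul_of_nonneg_left ht.2 hε.le) hTU
  have hnn : ∀ t ∈ Set.Icc 0 T, 0 ≤ ε * t := fun t ht => mul_nonneg hε.le ht.1
  have hIm : ∀ t ∈ Set.Icc 0 T, Ifun t ∈ Λ := fun t ht => hImem t ht.1 (hlt t ht)
  have hJm : ∀ t ∈ Set.Icc 0 T, J (ε * t) ∈ Λ := fun t ht => hJmem _ (hnn t ht) (hlt t ht)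
  have hId : ∀ t ∈ Set.Icc 0 T, HasDerivAt Ifun (ε • f (Ifun t) (Θ t)) t := fun t ht =>
    hIode t ht.1 (hlt t ht)
  have hΘd : ∀ t ∈ Set.Icc 0 T, HasDerivAt Θ (ω (Ifun t) + ε * g (Ifun t) (Θ t)) t :=
    fun t ht => hΘode t ht.1 (hlt t ht)
  have hJd : ∀ t ∈ Set.Icc 0 T, HasDerivAt (fun t' => J (ε * t')) (ε • fbar (J (ε * t))) t :=
    fun t ht => hasDerivAt_comp_const_mul ε (hJode _ (hnn t ht) (hlt t ht))
  have hRd : ∀ t ∈ Set.Icc 0 T, ∀ i j,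
      HasDerivAt (fun t' => R (ε * t') i j) (((ε • F' (J (ε * t))) * R (ε * t)) i j) t := by
    intro t ht i j
    simpa using hasDerivAt_comp_const_mul ε (hRode _ (hnn t ht) (hlt t ht) i j)
  have hKd : ∀ t ∈ Set.Icc 0 T, HasDerivAt (fun t' => K (ε * t'))
      (ε • (F' (J (ε * t)) *ᵥ K (ε * t) + pbar (J (ε * t)))) t :=
    fun t ht => hasDerivAt_comp_const_mul ε (hKode _ (hnn t ht) (hlt t ht))
  have hIeq : ∀ t, J (ε * t) + ε • L t = Ifun t := fun t => by
    rw [hL, smul_inv_smul₀ hε.ne', add_sub_cancel]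
  have hpdiff : ∀ t ∈ Set.Icc 0 T, pbar (Ifun t) =
      pbar (J (ε * t)) + ε • (𝓖 (J (ε * t)) (ε • L t) *ᵥ L t) := by
    intro t ht
    have := h𝓖 (J (ε * t)) (ε • L t) (by rw [hIeq]; exact hseg t ht.1 (hlt t ht))
    rwa [hIeq, Matrix.mulVec_smul] at this
  have hfdiff : ∀ t ∈ Set.Icc 0 T, fbar (Ifun t) = fbar (J (ε * t)) +
      ε • (F' (J (ε * t)) *ᵥ L t) + ε ^ 2 • ((1/2 : ℝ) • fun i => ∑ j, ∑ k,
        𝓗 (J (ε * t)) (ε • L t) i j k * L t j * L t k) := by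
    intro t ht
    have := h𝓗 (J (ε * t)) (ε • L t) (by rw [hIeq]; exact hseg t ht.1 (hlt t ht))
    rw [hIeq, Matrix.mulVec_smul] at this
    rw [this, smul_comm (ε ^ 2)]
    congr 2
    ext i
    simp only [Pi.smul_apply, smul_eq_mul, Finset.mul_sum]
    exact Finset.sum_congr rfl fun j _ => Finset.sum_congr rfl fun k _ => by ring
  -- continuity along the curves
  have hIc : ContinuousOn Ifun (Set.Icc 0 T) := fun t ht =>
    (hId t ht).continuousAt.continuousWithinAt
  have hJc : ContinuousOn (fun t => J (ε * t)) (Set.Icc 0 T) := fun t ht =>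
    (hJd t ht).continuousAt.continuousWithinAt
  have hΘc : ContinuousOn Θ (Set.Icc 0 T) := fun t ht =>
    (hΘd t ht).continuousAt.continuousWithinAt
  have hLc : ContinuousOn L (Set.Icc 0 T) :=
    ((hIc.sub hJc).const_smul ε⁻¹).congr fun t _ => hL t
  have hcurve : ∀ {n : ℕ} {φ : (Fin d → ℝ) → ℝ → Fin d → ℝ},
      ContDiffOn ℝ n (fun z : (Fin d → ℝ) × ℝ => φ z.1 z.2) (Λ ×ˢ Set.univ) →
      ContinuousOn (fun t => φ (Ifun t) (Θ t)) (Set.Icc 0 T) := fun hφ =>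
    hφ.continuousOn.comp (hIc.prodMk hΘc) fun t ht => ⟨hIm t ht, Set.mem_univ _⟩
  have hmv : ∀ {M : ℝ → Matrix (Fin d) (Fin d) ℝ} {x : ℝ → Fin d → ℝ},
      ContinuousOn M (Set.Icc 0 T) → ContinuousOn x (Set.Icc 0 T) →
      ContinuousOn (fun t => M t *ᵥ x t) (Set.Icc 0 T) := fun hM hx =>
    (Continuous.matrix_mulVec continuous_fst continuous_snd).comp_continuousOn (hM.prodMk hx)
  have hF'J : ContinuousOn (fun t => F' (J (ε * t))) (Set.Icc 0 T) := hF'c.comp hJc hJm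
  have h𝓜J : ContinuousOn (fun t => 𝓜 (J (ε * t))) (Set.Icc 0 T) := h𝓜c.comp hJc hJm
  have h𝓖c : ContinuousOn (fun t => 𝓖 (J (ε * t)) (ε • L t) *ᵥ L t) (Set.Icc 0 T) := by
    refine (((hpbar1.continuousOn.comp hIc hIm).sub
      (hpbar1.continuousOn.comp hJc hJm)).const_smul ε⁻¹).congr fun t ht => ?_
    simp [hpdiff t ht, hε.ne']
  have h𝓗c : ContinuousOn (fun t => (1/2 : ℝ) • fun i => ∑ j, ∑ k,
      𝓗 (J (ε * t)) (ε • L t) i j k * L t j * L t k) (Set.Icc 0 T) := by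
    refine ((((hfbar2.continuousOn.comp hIc hIm).sub (hfbar2.continuousOn.comp hJc hJm)).sub
      ((hmv hF'J hLc).const_smul ε)).const_smul (ε ^ 2)⁻¹).congr fun t ht => ?_
    simp only [Pi.smul_apply, Pi.sub_apply, Function.comp_apply]
    rw [hfdiff t ht, add_assoc, add_sub_cancel_left, add_sub_cancel_left,
      inv_smul_smul₀ (pow_ne_zero 2 hε.ne')]
  -- derivatives along the curves
  have hF'd : ∀ t ∈ Set.Icc 0 T, ∀ i k, HasDerivAt (fun t' => F' (J (ε * t')) i k)
      ((ε • (𝓜 (J (ε * t)) + F' (J (ε * t)) * F' (J (ε * t)))) i k) t := by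
    intro t ht i k
    refine ((hF'' _ (hJm t ht) i k).comp_hasDerivAt t (hJd t ht)).congr_deriv ?_
    simp [h𝓜 _ (hJm t ht) i k, Finset.mul_sum]
  have hLd : ∀ t ∈ Set.Icc 0 T, HasDerivAt L (f (Ifun t) (Θ t) - fbar (J (ε * t))) t := by
    intro t ht
    rw [funext hL]
    refine (((hId t ht).sub (hJd t ht)).const_smul ε⁻¹).congr_deriv ?_
    rw [← smul_sub, inv_smul_smul₀ hε.ne']
  have hchain : ∀ {φ φθ : (Fin d → ℝ) → ℝ → Fin d → ℝ}
      {φI : (Fin d → ℝ) → ℝ → Matrix (Fin d) (Fin d) ℝ},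
      ContDiffOn ℝ (1 : ℕ) (fun z : (Fin d → ℝ) × ℝ => φ z.1 z.2) (Λ ×ˢ Set.univ) →
      (∀ I ∈ Λ, ∀ θ : ℝ,
        HasFDerivAt (fun I' => φ I' θ) (Matrix.mulVecLin (φI I θ)).toContinuousLinearMap I) →
      (∀ I ∈ Λ, ∀ θ : ℝ, HasDerivAt (fun θ' => φ I θ') (φθ I θ) θ) →
      ∀ t ∈ Set.Icc 0 T, HasDerivAt (fun t' => φ (Ifun t') (Θ t'))
        (ω (Ifun t) • φθ (Ifun t) (Θ t) + ε • (φI (Ifun t) (Θ t) *ᵥ f (Ifun t) (Θ t) +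
          g (Ifun t) (Θ t) • φθ (Ifun t) (Θ t))) t := by
    intro φ φθ φI hφ hφI hφθ t ht
    refine (hasDerivAt_comp_curve_of_partial hΛ (by exact_mod_cast hφ) (hId t ht) (hΘd t ht)
      (hIm t ht) (hφI _ (hIm t ht) _) (hφθ _ (hIm t ht) _)).congr_deriv ?_
    simp only [map_smul, LinearMap.coe_toContinuousLinearMap', Matrix.mulVecLin_apply]
    module
  have hsd : ∀ t ∈ Set.Icc 0 T, HasDerivAt (fun t' => s (Ifun t') (Θ t'))
      (f (Ifun t) (Θ t) - fbar (Ifun t) + ε • p (Ifun t) (Θ t)) t := fun t ht =>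
    (hchain (hs2.of_le (by norm_cast)) hsI hsθ t ht).congr_deriv (by
      rw [hp _ (hIm t ht), ← sub_eq_iff_eq_add'.2 (hs _ (hIm t ht) (Θ t))])
  have hvd : ∀ t ∈ Set.Icc 0 T, HasDerivAt (fun t' => v (Ifun t') (Θ t'))
      (s (Ifun t) (Θ t) + ε • q (Ifun t) (Θ t)) t := fun t ht =>
    (hchain (hv2.of_le (by norm_cast)) hvI hvθ t ht).congr_deriv (by
      rw [hq _ (hIm t ht), hv _ (hIm t ht)])
  have hwd : ∀ t ∈ Set.Icc 0 T, HasDerivAt (fun t' => w (Ifun t') (Θ t'))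
      (p (Ifun t) (Θ t) - pbar (Ifun t) + ε • u (Ifun t) (Θ t)) t := fun t ht =>
    (hchain hw1 hwI hwθ t ht).congr_deriv (by
      rw [hu _ (hIm t ht), ← sub_eq_iff_eq_add'.2 (hw _ (hIm t ht) (Θ t))])
  have hF'vd : ∀ t ∈ Set.Icc 0 T,
      HasDerivAt (fun t' => F' (J (ε * t')) *ᵥ v (Ifun t') (Θ t'))
        ((ε • (𝓜 (J (ε * t)) + F' (J (ε * t)) * F' (J (ε * t)))) *ᵥ v (Ifun t) (Θ t) +
          F' (J (ε * t)) *ᵥ (s (Ifun t) (Θ t) + ε • q (Ifun t) (Θ t))) t := fun t ht =>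
    hasDerivWithinAt_univ.1 (hasDerivWithinAt_mulVec
      (fun i k => (hF'd t ht i k).hasDerivWithinAt) (hvd t ht).hasDerivWithinAt)
  have hRsd : ∀ t ∈ Set.Icc 0 T, HasDerivAt (fun t' => R (ε * t') *ᵥ s I₀ θ₀)
      (((ε • F' (J (ε * t))) * R (ε * t)) *ᵥ s I₀ θ₀ + R (ε * t) *ᵥ 0) t := fun t ht =>
    hasDerivWithinAt_univ.1 (hasDerivWithinAt_mulVec
      (fun i k => (hRd t ht i k).hasDerivWithinAt) (hasDerivWithinAt_const t _ _))
  -- the linear system satisfied by the remainder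
  have key := eq_mulVec_integral_of_hasDerivAt
    (A := fun t => ε • F' (J (ε * t))) (R := fun t => R (ε * t))
    (x := fun t => L t - s (Ifun t) (Θ t) + R (ε * t) *ᵥ s I₀ θ₀ + K (ε * t)
      + ε • (w (Ifun t) (Θ t) - F' (J (ε * t)) *ᵥ v (Ifun t) (Θ t)))
    (b := fun t => ε ^ 2 • (u (Ifun t) (Θ t)
      - F' (J (ε * t)) *ᵥ (w (Ifun t) (Θ t) + q (Ifun t) (Θ t))
      - 𝓜 (J (ε * t)) *ᵥ v (Ifun t) (Θ t)
      - 𝓖 (J (ε * t)) (ε • L t) *ᵥ L t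
      + (1/2 : ℝ) • fun i => ∑ j, ∑ k, 𝓗 (J (ε * t)) (ε • L t) i j k * L t j * L t k))
    hT (hF'J.const_smul ε) hRd (by simp [hR0]) ?_ ?_ ?_
  · simp only [Matrix.mulVec_smul, intervalIntegral.integral_smul] at key
    rw [← key]
    abel
  · intro t ht
    refine (((((hLd t ht).sub (hsd t ht)).add (hRsd t ht)).add (hKd t ht)).add
      (((hwd t ht).sub (hF'vd t ht)).const_smul ε)).congr_deriv ?_
    rw [hfdiff t ht, hpdiff t ht]
    simp only [Matrix.mulVec_add, Matrix.mulVec_sub, Matrix.mulVec_smul, Matrix.smul_mulVec,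
      Matrix.add_mulVec, Matrix.smul_mul, ← Matrix.mulVec_mulVec, Matrix.mulVec_zero]
    module
  · simp [hL, hIinit, hΘinit, hJ0, hR0, hK0, hw0 I₀ hI₀, hv0 I₀ hI₀]
  · exact (((((hcurve hu0).sub (hmv hF'J ((hcurve hw1).add (hcurve hq1)))).sub
      (hmv h𝓜J (hcurve hv2))).sub h𝓖c).add h𝓗c).const_smul (ε ^ 2)
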